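/- For every 3-by-3 reciprocal matrix A, the set of efficient vectors for A is closed under the (Hadamard) geometric mean: if w and v are positive 3-vectors efficient for A, then the vector with i-th entry (w_i·v_i)^{1/2} is efficient for A. -/

import Mathlib

/-- An n-by-n positive matrix is reciprocal if `A j i = 1 / A i j` for all `i, j`. -/
def Reciprocal {n : ℕ} (A : Matrix (Fin n) (Fin n) ℝ) : Prop :=
  (∀ i j, 0 < A i j) ∧ ∀ i j, A j i = 1 / A i j

/-- A positive vector `w` is efficient for a reciprocal matrix `A` if every positive
vector `v` with `|v i / v j - A i j| ≤ |w i / w j - A i j|` entrywise is a positive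
scalar multiple of `w`. -/
def Efficient {n : ℕ} (A : Matrix (Fin n) (Fin n) ℝ) (w : Fin n → ℝ) : Prop :=
  ∀ v : Fin n → ℝ, (∀ i, 0 < v i) →
    (∀ i j, |v i / v j - A i j| ≤ |w i / w j - A i j|) →
    ∃ c : ℝ, 0 < c ∧ v = fun i => c * w i

/-!
The efficient vectors are those whose digraph, with an arc `i → j` when `A i j ≤ w i / w j`, is
strongly connected: along an arc a competitor `v` satisfies `v i / v j ≤ w i / w j`, and if a set
of vertices has no outgoing arc, slightly enlarging the entries of `w` on it improves `w`.
By reciprocity any two vertices are joined by an arc, so for `n = 3` strong connectivity means that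
the digraph contains one of the two Hamiltonian cycles. The inequalities `A i j * w j ≤ w i` along a
given cycle survive geometric means, and two vectors with arcs along opposite cycles are
proportional.
-/

open Relation Set

section StronglyConnected

variable {α : Type*} {r : α → α → Prop}

/-- The digraph with vertex set `α` and arcs `r` is strongly connected. -/
def IsStronglyConnected (r : α → α → Prop) : Prop :=
  ∀ a b, ReflTransGen r a b

lemma IsStronglyConnected.mono {s : α → α → Prop} (hr : IsStronglyConnected r)
    (hrs : ∀ a b, r a b → s a b) : IsStronglyConnected s :=
  fun a b ↦ ReflTransGen.mono hrs a b (hr a b)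

lemma IsStronglyConnected.exists_rel_of_mem_of_notMem (hr : IsStronglyConnected r)
    {S : Set α} {a b : α} (ha : a ∈ S) (hb : b ∉ S) : ∃ x ∈ S, ∃ y ∉ S, r x y := by
  by_contra! hclosed
  have hmem : ∀ c, ReflTransGen r a c → c ∈ S := fun c hac ↦ by
    induction hac with
    | refl => exact ha
    | tail _ hxy hx => exact by_contra fun hy ↦ hclosed _ hx _ hy hxy
  exact hb (hmem b (hr a b))

lemma IsStronglyConnected.exists_ne_rel [Nontrivial α] (hr : IsStronglyConnected r) (a : α) :
    ∃ b ≠ a, r a b := by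
  obtain ⟨c, hc⟩ := exists_ne a
  obtain ⟨_, rfl, b, hb, hab⟩ := hr.exists_rel_of_mem_of_notMem (mem_singleton a) hc
  exact ⟨b, hb, hab⟩

lemma IsStronglyConnected.exists_ne_rel_right [Nontrivial α] (hr : IsStronglyConnected r)
    (a : α) : ∃ b ≠ a, r b a := by
  obtain ⟨c, hc⟩ := exists_ne a
  obtain ⟨b, hb, d, hd, hbd⟩ :=
    hr.exists_rel_of_mem_of_notMem (S := {a}ᶜ) hc (not_not_intro (mem_singleton a))
  exact ⟨b, hb, not_not.mp hd ▸ hbd⟩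

lemma IsStronglyConnected.eq_of_forall_rel_le {β : Type*} [PartialOrder β]
    (hr : IsStronglyConnected r) {f : α → β} (hf : ∀ a b, r a b → f a ≤ f b) (a b : α) :
    f a = f b := by
  have hle : ∀ a b, f a ≤ f b := fun a b ↦ by
    induction hr a b with
    | refl => exact le_rfl
    | tail _ hbc hab => exact hab.trans (hf _ _ hbc)
  exact (hle a b).antisymm (hle b a)

lemma isStronglyConnected_of_isCycleOn [Finite α] {σ : Equiv.Perm α} (hσ : σ.IsCycleOn univ)
    (hr : ∀ a, r a (σ a)) : IsStronglyConnected r := by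
  intro a b
  obtain ⟨k, -, rfl⟩ := hσ.exists_pow_eq' finite_univ (mem_univ a) (mem_univ b)
  induction k with
  | zero => exact .refl
  | succ k ih => simpa only [pow_succ', Equiv.Perm.mul_apply] using ih.tail (hr _)

lemma isCycleOn_finRotate (n : ℕ) : (finRotate (n + 2)).IsCycleOn univ := by
  simpa using Equiv.Perm.IsCycle.isCycleOn (isCycle_finRotate (n := n))

lemma IsStronglyConnected.forall_rel_finRotate_three {r : Fin 3 → Fin 3 → Prop}
    (hr : IsStronglyConnected r) (htotal : ∀ i j, r i j ∨ r j i) :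
    (∀ i, r i (finRotate 3 i)) ∨ ∀ i, r i ((finRotate 3)⁻¹ i) := by
  have hcover : ∀ i l, l = i ∨ l = finRotate 3 i ∨ l = (finRotate 3)⁻¹ i := by decide
  have hsq : ∀ i, (finRotate 3)⁻¹ ((finRotate 3)⁻¹ i) = finRotate 3 i := by decide
  rw [or_iff_not_imp_left, not_forall]
  rintro ⟨i, hi⟩
  have hback : r (finRotate 3 i) i := (htotal _ _).resolve_left hi
  have hout : r i ((finRotate 3)⁻¹ i) := by
    obtain ⟨l, hl, hil⟩ := hr.exists_ne_rel i
    rcases hcover i l with rfl | rfl | rfl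
    exacts [absurd rfl hl, absurd hil hi, hil]
  have hin : r ((finRotate 3)⁻¹ i) (finRotate 3 i) := by
    obtain ⟨l, hl, hli⟩ := hr.exists_ne_rel_right (finRotate 3 i)
    rcases hcover i l with rfl | rfl | rfl
    exacts [absurd hli hi, absurd rfl hl, hli]
  intro l
  rcases hcover i l with rfl | rfl | rfl
  · exact hout
  · simpa using hback
  · rwa [hsq]

end StronglyConnected

lemma exists_pos_eq_mul_of_isStronglyConnected {α : Type*} {v w : α → ℝ}
    (hv : ∀ a, 0 < v a) (hw : ∀ a, 0 < w a)
    (h : IsStronglyConnected fun a b ↦ v a / v b ≤ w a / w b) :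
    ∃ c : ℝ, 0 < c ∧ v = fun a ↦ c * w a := by
  have hratio : ∀ a b, v a / w a = v b / w b := h.eq_of_forall_rel_le fun a b hab ↦ by
    rw [div_le_div_iff₀ (hv b) (hw b)] at hab
    rw [div_le_div_iff₀ (hw a) (hw b)]
    linarith
  rcases isEmpty_or_nonempty α with _ | ⟨⟨a⟩⟩
  · exact ⟨1, one_pos, Subsingleton.elim _ _⟩
  · exact ⟨v a / w a, div_pos (hv a) (hw a), funext fun b ↦ by
      rw [hratio a b, div_mul_cancel₀ _ (hw b).ne']⟩

lemma exists_one_lt_forall_mul_le {ι : Type*} [Finite ι] {f g : ι → ℝ} (h : ∀ i, f i < g i) :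
    ∃ t > 1, ∀ i, t * f i ≤ g i := by
  have hnear : ∀ i, ∀ᶠ t in nhdsWithin (1 : ℝ) (Ioi 1), t * f i < g i := fun i ↦
    ((continuous_id.mul continuous_const).tendsto' 1 (f i) (one_mul _)).eventually_lt_const (h i)
      |>.filter_mono nhdsWithin_le_nhds
  obtain ⟨t, hlt, ht⟩ := ((Filter.eventually_all.mpr hnear).and self_mem_nhdsWithin).exists
  exact ⟨t, ht, fun i ↦ (hlt i).le⟩

section Efficiency

variable {n : ℕ} {A : Matrix (Fin n) (Fin n) ℝ} {v w : Fin n → ℝ}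

/-- The arcs `i → j` of the digraph of `w` with respect to `A`: those with `A i j ≤ w i / w j`,
written without division. -/
def EfficiencyArc (A : Matrix (Fin n) (Fin n) ℝ) (w : Fin n → ℝ) (i j : Fin n) : Prop :=
  A i j * w j ≤ w i

lemma efficiencyArc_iff_le_div {i j : Fin n} (hj : 0 < w j) :
    EfficiencyArc A w i j ↔ A i j ≤ w i / w j :=
  (le_div_iff₀ hj).symm

lemma Reciprocal.efficiencyArc_iff_div_le (hA : Reciprocal A) {i j : Fin n} (hi : 0 < w i) :
    EfficiencyArc A w i j ↔ w j / w i ≤ A j i := by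
  rw [EfficiencyArc, hA.2 j i, one_div, inv_mul_le_iff₀ (hA.1 j i), div_le_iff₀ hi]

lemma Reciprocal.efficiencyArc_total (hA : Reciprocal A) (hw : ∀ i, 0 < w i) (i j : Fin n) :
    EfficiencyArc A w i j ∨ EfficiencyArc A w j i := by
  rw [efficiencyArc_iff_le_div (hw j), hA.efficiencyArc_iff_div_le (hw j)]
  exact le_total _ _

lemma efficient_of_isStronglyConnected (hw : ∀ i, 0 < w i)
    (h : IsStronglyConnected (EfficiencyArc A w)) : Efficient A w := by
  intro v hv hle
  refine exists_pos_eq_mul_of_isStronglyConnected hv hw (h.mono fun i j hij ↦ ?_)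
  have hij' : A i j ≤ w i / w j := (efficiencyArc_iff_le_div (hw j)).mp hij
  have habs : v i / v j - A i j ≤ w i / w j - A i j :=
    calc v i / v j - A i j ≤ |v i / v j - A i j| := le_abs_self _
      _ ≤ |w i / w j - A i j| := hle i j
      _ = w i / w j - A i j := abs_of_nonneg (sub_nonneg.mpr hij')
  exact (sub_le_sub_iff_right _).mp habs

lemma Reciprocal.abs_div_sub_le_of_piecewise (hA : Reciprocal A) (hw : ∀ i, 0 < w i)
    {S : Set (Fin n)} [DecidablePred (· ∈ S)] {t : ℝ} (ht : 1 < t)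
    (hS : ∀ i ∈ S, ∀ j ∉ S, t * w i ≤ A i j * w j) (i j : Fin n) :
    |S.piecewise (t • w) w i / S.piecewise (t • w) w j - A i j| ≤ |w i / w j - A i j| := by
  have ht₀ : 0 < t := one_pos.trans ht
  have hwt : ∀ i, w i ≤ t * w i := fun i ↦ le_mul_of_one_le_left (hw i).le ht.le
  by_cases hi : i ∈ S <;> by_cases hj : j ∈ S <;>
    simp only [hi, hj, not_false_eq_true, piecewise_eq_of_mem, piecewise_eq_of_notMem,
      Pi.smul_apply, smul_eq_mul]
  · rw [mul_div_mul_left _ _ ht₀.ne']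
  · refine abs_sub_left_of_mem_uIcc (Icc_subset_uIcc' ⟨?_, ?_⟩)
    · exact div_le_div_of_nonneg_right (hwt i) (hw j).le
    · exact (div_le_iff₀ (hw j)).mpr (hS i hi j hj)
  · refine abs_sub_left_of_mem_uIcc (Icc_subset_uIcc ⟨?_, ?_⟩)
    · rw [le_div_iff₀ (mul_pos ht₀ (hw j)), hA.2 j i, one_div, inv_mul_le_iff₀ (hA.1 j i)]
      exact hS j hj i hi
    · exact div_le_div_of_nonneg_left (hw i).le (hw j) (hwt j)
  · rfl

lemma Efficient.exists_arc_of_mem_of_notMem (hA : Reciprocal A) (hw : ∀ i, 0 < w i)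
    (h : Efficient A w) {S : Set (Fin n)} {i j : Fin n} (hi : i ∈ S) (hj : j ∉ S) :
    ∃ x ∈ S, ∃ y ∉ S, EfficiencyArc A w x y := by
  classical
  by_contra! hcut
  obtain ⟨t, ht, htS⟩ := exists_one_lt_forall_mul_le
    (f := fun p : S × ↥Sᶜ ↦ w p.1) (g := fun p ↦ A p.1 p.2 * w p.2)
    fun p ↦ not_le.mp (hcut _ p.1.2 _ p.2.2)
  have hpos : ∀ i, 0 < S.piecewise (t • w) w i := fun i ↦ by
    by_cases hi : i ∈ S
    · simpa [hi] using mul_pos (one_pos.trans ht) (hw i)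
    · simpa [hi] using hw i
  obtain ⟨c, -, hc⟩ := h _ hpos <|
    hA.abs_div_sub_le_of_piecewise hw ht fun i hi j hj ↦ htS (⟨i, hi⟩, ⟨j, hj⟩)
  have hct : t = c := by simpa [hi, (hw i).ne'] using congrFun hc i
  have hc1 : c = 1 := by simpa [hj, (hw j).ne'] using congrFun hc j
  exact ht.ne' (hct.trans hc1)

theorem efficient_iff_isStronglyConnected (hA : Reciprocal A) (hw : ∀ i, 0 < w i) :
    Efficient A w ↔ IsStronglyConnected (EfficiencyArc A w) := by
  refine ⟨fun h i j ↦ ?_, efficient_of_isStronglyConnected hw⟩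
  by_contra hij
  obtain ⟨x, hx, y, hy, hxy⟩ :=
    h.exists_arc_of_mem_of_notMem hA hw (S := {k | ReflTransGen (EfficiencyArc A w) i k}) .refl hij
  exact hy (hx.tail hxy)

lemma EfficiencyArc.geomMean {i j : Fin n} (hA : 0 ≤ A i j) (hwj : 0 ≤ w j) (hvj : 0 ≤ v j)
    (hw : EfficiencyArc A w i j) (hv : EfficiencyArc A v i j) :
    EfficiencyArc A (fun k ↦ (w k * v k) ^ ((1 : ℝ) / 2)) i j := by
  have hAv : 0 ≤ A i j * v j := mul_nonneg hA hvj
  have hwi : 0 ≤ w i := (mul_nonneg hA hwj).trans hw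
  simp only [EfficiencyArc, ← Real.sqrt_eq_rpow]
  calc A i j * √(w j * v j) = √((A i j * w j) * (A i j * v j)) := by
        rw [mul_mul_mul_comm, Real.sqrt_mul (mul_self_nonneg _), Real.sqrt_mul_self hA]
    _ ≤ √(w i * v i) := Real.sqrt_le_sqrt (mul_le_mul hw hv hAv hwi)

section Cycle

variable {σ : Equiv.Perm (Fin n)}

lemma efficient_geomMean_of_isCycleOn (hA : ∀ i j, 0 ≤ A i j) (hσ : σ.IsCycleOn univ)
    (hw : ∀ i, 0 < w i) (hv : ∀ i, 0 < v i)
    (hwσ : ∀ i, EfficiencyArc A w i (σ i)) (hvσ : ∀ i, EfficiencyArc A v i (σ i)) :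
    Efficient A (fun i ↦ (w i * v i) ^ ((1 : ℝ) / 2)) :=
  efficient_of_isStronglyConnected (fun i ↦ Real.rpow_pos_of_pos (mul_pos (hw i) (hv i)) _) <|
    isStronglyConnected_of_isCycleOn hσ fun i ↦
      (hwσ i).geomMean (hA _ _) (hw _).le (hv _).le (hvσ i)

lemma Reciprocal.efficiencyArc_of_arcs_inv (hA : Reciprocal A) (hσ : σ.IsCycleOn univ)
    (hw : ∀ i, 0 < w i) (hv : ∀ i, 0 < v i)
    (hwσ : ∀ i, EfficiencyArc A w i (σ i)) (hvσ : ∀ i, EfficiencyArc A v i (σ⁻¹ i)) (i : Fin n) :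
    EfficiencyArc A v i (σ i) := by
  have hratio : ∀ i, v i / v (σ i) ≤ w i / w (σ i) := fun i ↦
    calc v i / v (σ i) ≤ A i (σ i) := by
          simpa using (hA.efficiencyArc_iff_div_le (hv (σ i))).mp (hvσ (σ i))
      _ ≤ w i / w (σ i) := (efficiencyArc_iff_le_div (hw _)).mp (hwσ i)
  obtain ⟨c, hc, rfl⟩ := exists_pos_eq_mul_of_isStronglyConnected hv hw
    (isStronglyConnected_of_isCycleOn hσ hratio)
  simpa only [EfficiencyArc, mul_left_comm _ c] using mul_le_mul_of_nonneg_left (hwσ i) hc.le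

end Cycle

end Efficiency

lemma Efficient.forall_arc_finRotate_three {A : Matrix (Fin 3) (Fin 3) ℝ} {w : Fin 3 → ℝ}
    (hA : Reciprocal A) (hw : ∀ i, 0 < w i) (h : Efficient A w) :
    (∀ i, EfficiencyArc A w i (finRotate 3 i)) ∨ ∀ i, EfficiencyArc A w i ((finRotate 3)⁻¹ i) :=
  ((efficient_iff_isStronglyConnected hA hw).mp h).forall_rel_finRotate_three
    (hA.efficiencyArc_total hw)

/-- For 3-by-3 reciprocal matrices, the set of efficient vectors is closed under the
Hadamard geometric mean. -/
theorem stmt_13 (A : Matrix (Fin 3) (Fin 3) ℝ) (hA : Reciprocal A)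
    (w v : Fin 3 → ℝ) (hw : ∀ i, 0 < w i) (hv : ∀ i, 0 < v i)
    (hweff : Efficient A w) (hveff : Efficient A v) :
    Efficient A (fun i => (w i * v i) ^ ((1 : ℝ) / 2)) := by
  have hnonneg : ∀ i j, 0 ≤ A i j := fun i j ↦ (hA.1 i j).le
  have hσ : (finRotate 3).IsCycleOn univ := isCycleOn_finRotate 1
  rcases hweff.forall_arc_finRotate_three hA hw with hwσ | hwσ <;>
    rcases hveff.forall_arc_finRotate_three hA hv with hvσ | hvσ
  · exact efficient_geomMean_of_isCycleOn hnonneg hσ hw hv hwσ hvσ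
  · exact efficient_geomMean_of_isCycleOn hnonneg hσ hw hv hwσ
      (hA.efficiencyArc_of_arcs_inv hσ hw hv hwσ hvσ)
  · exact efficient_geomMean_of_isCycleOn hnonneg hσ hw hv
      (hA.efficiencyArc_of_arcs_inv hσ hv hw hvσ hwσ) hvσ
  · exact efficient_geomMean_of_isCycleOn hnonneg hσ.inv hw hv hwσ hvσ
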